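/- Let Ω ⊂ ℝ^N be open and bounded, let F : ℝ × ℝ^N → ℝ be of class C³, let u : ℝ^N → ℝ be bounded and of class C³ with bounded derivatives, and let η : ℝ^N → ℝ^N be bounded and of class C³ with bounded derivatives. Set Z := (η·∇)η, let M_t(x) be the N×N matrix with entries δ_{ij} + t ∂η^i/∂x_j + (t²/2) ∂Z^i/∂x_j, and define 𝔄(t) := ∫_Ω F(u(x), q_t(x)) · det M_t(x) dx for |t| small, where q_t(x) has j-th component Σ_i ∂u/∂x_i (M_t(x)⁻¹)_{ij}. Then 𝔄 is twice differentiable at t = 0 and 𝔄''(0) = ∫_Ω { F·X − 2 (∇_p F, ∇u·∇η) · div η − 2 (∇_p F, Y) + Σ_{i,j} F_{p_i p_j} (∇u·∇η)_i (∇u·∇η)_j } dx, where F and its derivatives are evaluated at (u, ∇u), X := div Z + (div η)² − trace((∇η)²), Y has k-th component (1/2) Σ_i ∂u/∂x_i ∂Z^i/∂x_k − Σ_{i,j} ∂u/∂x_i ∂η^i/∂x_j ∂η^j/∂x_k, and (∇u·∇η)_j := Σ_i ∂u/∂x_i ∂η^i/∂x_j. -/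

import Mathlib

open Filter MeasureTheory Topology
open scoped RealInnerProductSpace

namespace PaperAC

/-- The partial derivative `∂f/∂x_j` of a scalar function on `ℝ^N`. -/
noncomputable def pdv {N : ℕ} (f : (Fin N → ℝ) → ℝ) (j : Fin N) (x : Fin N → ℝ) : ℝ :=
  fderiv ℝ f x (Pi.single j 1)

/-- The advection field `(η·∇)η`, with components `((η·∇)η)^i = ∑_j η^j ∂η^i/∂x_j`. -/
noncomputable def advf {N : ℕ} (η : (Fin N → ℝ) → (Fin N → ℝ)) (x : Fin N → ℝ) :
    Fin N → ℝ :=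
  fun i => ∑ j, η x j * pdv (fun z => η z i) j x

/-- The gradient `∇u` of a scalar function on `ℝ^N`. -/
noncomputable def grad {N : ℕ} (u : (Fin N → ℝ) → ℝ) (x : Fin N → ℝ) : Fin N → ℝ :=
  fun i => pdv u i x

/-- `X₀ := (D²u·η, η) + (∇u, 2(η·∇)η − ζ)`. -/
noncomputable def X0 {N : ℕ} (u : (Fin N → ℝ) → ℝ) (η ζ : (Fin N → ℝ) → (Fin N → ℝ))
    (y : Fin N → ℝ) : ℝ :=
  (∑ i, ∑ j, pdv (pdv u i) j y * η y i * η y j)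
    + ∑ i, pdv u i y * (2 * advf η y i - ζ y i)

/-- `−∇u·η`. -/
noncomputable def nGradDot {N : ℕ} (u : (Fin N → ℝ) → ℝ) (η : (Fin N → ℝ) → (Fin N → ℝ))
    (x : Fin N → ℝ) : ℝ :=
  -(∑ i, pdv u i x * η x i)

/-- `F_z`, the partial derivative of `F = F(z,p)` in the scalar variable. -/
noncomputable def Fz {N : ℕ} (F : ℝ × (Fin N → ℝ) → ℝ) (z : ℝ) (p : Fin N → ℝ) : ℝ :=
  fderiv ℝ F (z, p) (1, 0)

/-- `F_{p_i}`. -/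
noncomputable def Fp {N : ℕ} (F : ℝ × (Fin N → ℝ) → ℝ) (i : Fin N) (z : ℝ) (p : Fin N → ℝ) :
    ℝ :=
  fderiv ℝ F (z, p) (0, Pi.single i 1)

/-- `F_{zz}`. -/
noncomputable def Fzz {N : ℕ} (F : ℝ × (Fin N → ℝ) → ℝ) (z : ℝ) (p : Fin N → ℝ) : ℝ :=
  fderiv ℝ (fun q => fderiv ℝ F q (1, 0)) (z, p) (1, 0)

/-- `F_{z p_i}`. -/
noncomputable def Fzp {N : ℕ} (F : ℝ × (Fin N → ℝ) → ℝ) (i : Fin N) (z : ℝ) (p : Fin N → ℝ) :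
    ℝ :=
  fderiv ℝ (fun q => fderiv ℝ F q ((0 : ℝ), Pi.single i 1)) (z, p) (1, 0)

/-- `F_{p_i p_j}`. -/
noncomputable def Fpp {N : ℕ} (F : ℝ × (Fin N → ℝ) → ℝ) (i j : Fin N) (z : ℝ)
    (p : Fin N → ℝ) : ℝ :=
  fderiv ℝ (fun q => fderiv ℝ F q ((0 : ℝ), Pi.single j 1)) (z, p) ((0 : ℝ), Pi.single i 1)

/-- `𝔄₁(t) = A(u ∘ Φ_t⁻¹) = ∫_Ω F(u_t, ∇u_t)`, the inner deformation of the functional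
`A(w) := ∫_Ω F(w, ∇w)`. -/
noncomputable def innerA {N : ℕ} (Ω : Set (Fin N → ℝ)) (F : ℝ × (Fin N → ℝ) → ℝ)
    (u : (Fin N → ℝ) → ℝ) (Φ : ℝ → (Fin N → ℝ) → (Fin N → ℝ)) (t : ℝ) : ℝ :=
  ∫ y in Ω, F (u (Function.invFun (Φ t) y),
      grad (fun z => u (Function.invFun (Φ t) z)) y)

/-- `t ↦ A(u + tφ) = ∫_Ω F(u + tφ, ∇u + t∇φ)`, the outer deformation of the functional
`A(w) := ∫_Ω F(w, ∇w)`. -/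
noncomputable def gateauxA {N : ℕ} (Ω : Set (Fin N → ℝ)) (F : ℝ × (Fin N → ℝ) → ℝ)
    (u φ : (Fin N → ℝ) → ℝ) (t : ℝ) : ℝ :=
  ∫ x in Ω, F (u x + t * φ x, fun i => pdv u i x + t * pdv φ i x)

/-- The matrix `M_t(x)` with entries `δ_{ij} + t ∂η^i/∂x_j + (t²/2) ∂W^i/∂x_j`. -/
noncomputable def defMat {N : ℕ} (η W : (Fin N → ℝ) → (Fin N → ℝ)) (t : ℝ)
    (x : Fin N → ℝ) : Matrix (Fin N) (Fin N) ℝ :=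
  Matrix.of fun i j =>
    (if i = j then (1 : ℝ) else 0) + t * pdv (fun z => η z i) j x
      + (t ^ 2 / 2) * pdv (fun z => W z i) j x

/-- `Φ(a) := ∫_0^a |s² − 1| ds`. -/
noncomputable def PhiAC (a : ℝ) : ℝ := ∫ s in (0 : ℝ)..a, |s ^ 2 - 1|

/-- All partial derivatives (= iterated Fréchet derivatives) of `f` up to order `n` are
bounded; the case `i = 0` says `f` itself is bounded. -/
def BddUpTo {N : ℕ} {E : Type*} [NormedAddCommGroup E] [NormedSpace ℝ E]
    (n : ℕ) (f : (Fin N → ℝ) → E) : Prop :=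
  ∀ i : ℕ, i ≤ n → ∃ C : ℝ, ∀ x, ‖iteratedFDeriv ℝ i f x‖ ≤ C

/-!
On the open set of parameters where `M = I + tB + (t²/2)C` is invertible, the integrand
`F(z, p·M⁻¹) det M` is a `C²` function of `(t, (z, p), (B, C))`. As `x` runs through the compact
closure of the domain, `(u, ∇u, ∇η, ∇Z)` stays in a compact set of parameters, all of which are
admissible for small `|t|`, so one may differentiate twice under the integral sign. The second
derivative of the integrand at `t = 0` then depends only on the 2-jets there of `M⁻¹` and `det M`,
which come from `(M⁻¹)' = -M⁻¹M'M⁻¹` and Jacobi's formula `(det M)' = det M · tr(M⁻¹M')`.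
-/

section SecondDerivative

variable {𝕜 E E' : Type*} [NontriviallyNormedField 𝕜] [NormedAddCommGroup E] [NormedSpace 𝕜 E]
  [NormedAddCommGroup E'] [NormedSpace 𝕜 E']

/-- `f` is twice differentiable at `t`, with first derivative `f'` and second derivative `f''`.
This packages the 2-jet of a curve without choosing the derivative at the neighbouring points. -/
def HasSecondDerivAt (f : 𝕜 → E) (f' f'' : E) (t : 𝕜) : Prop :=
  ∃ g : 𝕜 → E, (∀ᶠ s in 𝓝 t, HasDerivAt f (g s) s) ∧ g t = f' ∧ HasDerivAt g f'' t

namespace HasSecondDerivAt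

variable {f : 𝕜 → E} {f' f'' : E} {t : 𝕜}

lemma hasDerivAt (hf : HasSecondDerivAt f f' f'' t) : HasDerivAt f f' t := by
  obtain ⟨g, hfg, rfl, -⟩ := hf
  exact hfg.self_of_nhds

lemma congr_derivs {k' k'' : E} (hf : HasSecondDerivAt f f' f'' t) (h' : f' = k')
    (h'' : f'' = k'') : HasSecondDerivAt f k' k'' t :=
  h' ▸ h'' ▸ hf

lemma deriv_deriv (hf : HasSecondDerivAt f f' f'' t) : deriv (deriv f) t = f'' := by
  obtain ⟨g, hfg, -, hg⟩ := hf
  have hderiv : deriv f =ᶠ[𝓝 t] g := hfg.mono fun s hs => hs.deriv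
  rw [hderiv.deriv_eq, hg.deriv]

lemma const (c : E) : HasSecondDerivAt (fun _ : 𝕜 => c) 0 0 t :=
  ⟨fun _ => 0, .of_forall fun s => hasDerivAt_const s c, rfl, hasDerivAt_const t 0⟩

lemma prodMk {k : 𝕜 → E'} {k' k'' : E'} (hf : HasSecondDerivAt f f' f'' t)
    (hk : HasSecondDerivAt k k' k'' t) :
    HasSecondDerivAt (fun s => (f s, k s)) (f', k') (f'', k'') t := by
  obtain ⟨g, hfg, rfl, hg⟩ := hf
  obtain ⟨l, hkl, rfl, hl⟩ := hk
  exact ⟨fun s => (g s, l s), hfg.mp (hkl.mono fun s hks hfs => hfs.prodMk hks), rfl,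
    hg.prodMk hl⟩

lemma clm_comp (L : E →L[𝕜] E') (hf : HasSecondDerivAt f f' f'' t) :
    HasSecondDerivAt (fun s => L (f s)) (L f') (L f'') t := by
  obtain ⟨g, hfg, rfl, hg⟩ := hf
  exact ⟨fun s => L (g s), hfg.mono fun s hs => L.hasFDerivAt.comp_hasDerivAt s hs, rfl,
    L.hasFDerivAt.comp_hasDerivAt t hg⟩

lemma contDiffAt_comp {Ψ : E → E'} (hΨ : ContDiffAt 𝕜 2 Ψ (f t))
    (hf : HasSecondDerivAt f f' f'' t) :
    HasSecondDerivAt (fun s => Ψ (f s)) (fderiv 𝕜 Ψ (f t) f')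
      (fderiv 𝕜 (fderiv 𝕜 Ψ) (f t) f' f' + fderiv 𝕜 Ψ (f t) f'') t := by
  have hft := hf.hasDerivAt
  obtain ⟨g, hfg, rfl, hg⟩ := hf
  have hΨ_diff : ∀ᶠ s in 𝓝 t, DifferentiableAt 𝕜 Ψ (f s) :=
    hft.continuousAt.eventually <|
      (hΨ.eventually (by simp)).mono fun _ h => h.differentiableAt (by simp)
  have hΨ'_diff : DifferentiableAt 𝕜 (fderiv 𝕜 Ψ) (f t) :=
    (hΨ.fderiv_right (m := 1) (by norm_num)).differentiableAt (by simp)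
  exact ⟨fun s => fderiv 𝕜 Ψ (f s) (g s),
    hΨ_diff.mp (hfg.mono fun s hs hd => hd.hasFDerivAt.comp_hasDerivAt s hs), rfl,
    (hΨ'_diff.hasFDerivAt.comp_hasDerivAt t hft).clm_apply hg⟩

section Algebra

variable {R : Type*} [NormedRing R] [NormedAlgebra 𝕜 R] {a b : 𝕜 → R} {a' a'' b' b'' : R}

lemma mul (ha : HasSecondDerivAt a a' a'' t) (hb : HasSecondDerivAt b b' b'' t) :
    HasSecondDerivAt (fun s => a s * b s) (a' * b t + a t * b')
      (a'' * b t + 2 * (a' * b') + a t * b'') t := by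
  have hat := ha.hasDerivAt
  have hbt := hb.hasDerivAt
  obtain ⟨g, hag, rfl, hg⟩ := ha
  obtain ⟨l, hbl, rfl, hl⟩ := hb
  refine ⟨fun s => g s * b s + a s * l s, hag.mp (hbl.mono fun s hbs has => has.mul hbs), rfl,
    ((hg.mul hbt).add (hat.mul hl)).congr_deriv ?_⟩
  noncomm_ring

end Algebra

end HasSecondDerivAt

lemma hasDerivAt_ringInverse_comp {R : Type*} [NormedRing R] [HasSummableGeomSeries R]
    [NormedAlgebra 𝕜 R] {a : 𝕜 → R} {a' : R} {t : 𝕜} (hu : IsUnit (a t))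
    (ha : HasDerivAt a a' t) :
    HasDerivAt (fun s => Ring.inverse (a s))
      (-(Ring.inverse (a t) * a' * Ring.inverse (a t))) t := by
  obtain ⟨v, hv⟩ := hu
  have hinv := hasFDerivAt_ringInverse (𝕜 := 𝕜) v
  rw [← Ring.inverse_unit, hv] at hinv
  simpa using! hinv.comp_hasDerivAt t ha

lemma HasSecondDerivAt.ringInverse {R : Type*} [NormedRing R] [HasSummableGeomSeries R]
    [NormedAlgebra 𝕜 R] {a : 𝕜 → R} {a' a'' : R} {t : 𝕜} (hu : IsUnit (a t))
    (ha : HasSecondDerivAt a a' a'' t) :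
    HasSecondDerivAt (fun s => Ring.inverse (a s))
      (-(Ring.inverse (a t) * a' * Ring.inverse (a t)))
      (2 * (Ring.inverse (a t) * a' * Ring.inverse (a t) * a' * Ring.inverse (a t))
        - Ring.inverse (a t) * a'' * Ring.inverse (a t)) t := by
  have hat := ha.hasDerivAt
  obtain ⟨g, hag, rfl, hg⟩ := ha
  have hunit : ∀ᶠ s in 𝓝 t, IsUnit (a s) := hat.continuousAt.eventually (Units.isOpen.mem_nhds hu)
  have hinv := hasDerivAt_ringInverse_comp hu hat
  refine ⟨fun s => -(Ring.inverse (a s) * g s * Ring.inverse (a s)),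
    hunit.mp (hag.mono fun s hs hus => hasDerivAt_ringInverse_comp hus hs), rfl,
    ((hinv.fun_mul hg).fun_mul hinv).fun_neg.congr_deriv ?_⟩
  noncomm_ring

end SecondDerivative

section ParametricIntegral

variable {X E : Type*} [TopologicalSpace X] [T2Space X] [MeasurableSpace X] [BorelSpace X]
  {μ : Measure X} [IsFiniteMeasureOnCompacts μ] [NormedAddCommGroup E] [NormedSpace ℝ E]
  {K s : Set X} {J : Set ℝ} {t : ℝ}

lemma hasDerivAt_integral_of_continuousOn (hK : IsCompact K) (hsK : s ⊆ K) (hJ : IsOpen J)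
    {f f' : ℝ → X → E} (hf : ∀ r ∈ J, ContinuousOn (f r) K)
    (hf' : ContinuousOn (Function.uncurry f') (J ×ˢ K))
    (hderiv : ∀ r ∈ J, ∀ x ∈ K, HasDerivAt (f · x) (f' r x) r) (ht : t ∈ J) :
    HasDerivAt (fun r => ∫ x in s, f r x ∂μ) (∫ x in s, f' t x ∂μ) t := by
  have hmono : μ.restrict s ≤ μ.restrict K := Measure.restrict_mono hsK le_rfl
  have hae {P : X → Prop} (hP : ∀ x ∈ K, P x) : ∀ᵐ x ∂μ.restrict s, P x :=
    ae_mono hmono <| (ae_restrict_mem hK.measurableSet).mono hP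
  have hint {h : X → E} (hh : ContinuousOn h K) : IntegrableOn h s μ :=
    (hh.integrableOn_compact hK).mono_set hsK
  obtain ⟨I, hI, hIJ, hI_compact⟩ := local_compact_nhds (hJ.mem_nhds ht)
  obtain ⟨c, hc⟩ := (hI_compact.prod hK).exists_bound_of_continuousOn
    (hf'.mono (Set.prod_mono_left hIJ))
  have hf't : ContinuousOn (f' t) K :=
    hf'.comp (f := fun x => (t, x)) (by fun_prop) fun x hx => ⟨ht, hx⟩
  refine (hasDerivAt_integral_of_dominated_loc_of_deriv_le (bound := fun _ => c) hI
    ?_ (hint (hf t ht)) (hint hf't).aestronglyMeasurable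
    (hae fun x hx r hr => hc (r, x) ⟨hr, hx⟩)
    (integrableOn_const ((measure_mono hsK).trans_lt hK.measure_lt_top).ne)
    (hae fun x hx r hr => hderiv r (hIJ hr) x hx)).2
  filter_upwards [hJ.mem_nhds ht] with r hr using (hint (hf r hr)).aestronglyMeasurable

variable {P : Type*} [NormedAddCommGroup P] [NormedSpace ℝ P] {V : Set (ℝ × P)} {G : ℝ × P → E}

/-- The partial derivative `∂G/∂t` of a map `G(t, y)` in the real variable `t`. -/
noncomputable def derivFst (G : ℝ × P → E) (q : ℝ × P) : E :=
  deriv (fun r => G (r, q.2)) q.1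

lemma hasDerivAt_fst {q : ℝ × P} (hG : DifferentiableAt ℝ G q) :
    HasDerivAt (fun r => G (r, q.2)) (fderiv ℝ G q (1, 0)) q.1 :=
  hG.hasFDerivAt.comp_hasDerivAt q.1 ((hasDerivAt_id q.1).prodMk (hasDerivAt_const q.1 q.2))

lemma contDiffOn_derivFst {m n : WithTop ℕ∞} (hV : IsOpen V) (hG : ContDiffOn ℝ n G V)
    (hmn : m + 1 ≤ n) : ContDiffOn ℝ m (derivFst G) V := by
  have hdiff : DifferentiableOn ℝ G V :=
    hG.differentiableOn (ne_of_gt <| lt_of_lt_of_le (by simp) hmn)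
  exact ((hG.fderiv_of_isOpen hV hmn).clm_apply contDiffOn_const).congr fun q hq =>
    (hasDerivAt_fst (hdiff.differentiableAt (hV.mem_nhds hq))).deriv

lemma hasDerivAt_integral_of_contDiffOn (hK : IsCompact K) (hsK : s ⊆ K) (hJ : IsOpen J)
    (hV : IsOpen V) (hG : ContDiffOn ℝ 1 G V) {w : X → P} (hw : ContinuousOn w K)
    (hJV : ∀ r ∈ J, ∀ x ∈ K, (r, w x) ∈ V) (ht : t ∈ J) :
    HasDerivAt (fun r => ∫ x in s, G (r, w x) ∂μ) (∫ x in s, derivFst G (t, w x) ∂μ) t := by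
  refine hasDerivAt_integral_of_continuousOn hK hsK hJ (f := fun r x => G (r, w x))
    (f' := fun r x => derivFst G (r, w x)) (fun r hr => ?_) ?_ (fun r hr x hx => ?_) ht
  · exact hG.continuousOn.comp (by fun_prop) (hJV r hr)
  · exact (contDiffOn_derivFst (m := 0) hV hG (by simp)).continuousOn.comp
      (continuousOn_fst.prodMk (hw.comp continuousOn_snd fun q hq => hq.2))
      fun q hq => hJV q.1 hq.1 q.2 hq.2
  · have hdiff := (hG.differentiableOn (by simp)).differentiableAt (hV.mem_nhds (hJV r hr x hx))
    exact (hasDerivAt_fst hdiff).differentiableAt.hasDerivAt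

end ParametricIntegral

section Matrix

open scoped Matrix Matrix.Norms.Operator

variable {ι : Type*} [Fintype ι] [DecidableEq ι]

section Jacobi

lemma det_updateRow_eq_vecMul_adjugate {R : Type*} [CommRing R] (A : Matrix ι ι R) (i : ι)
    (b : ι → R) : (A.updateRow i b).det = (b ᵥ* A.adjugate) i := by
  rw [← Matrix.cramer_transpose_apply, Matrix.cramer_eq_adjugate_mulVec,
    ← Matrix.adjugate_transpose, Matrix.mulVec_transpose]

variable {𝕜 : Type*} [NontriviallyNormedField 𝕜] {M : 𝕜 → Matrix ι ι 𝕜} {M' : Matrix ι ι 𝕜}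
  {t : 𝕜}

lemma hasDerivAt_det (hM : HasDerivAt M M' t) :
    HasDerivAt (fun s => (M s).det) ((M t).adjugate * M').trace t := by
  let D : ContinuousMultilinearMap 𝕜 (fun _ : ι => ι → 𝕜) 𝕜 :=
    ⟨Matrix.detRowAlternating.toMultilinearMap, Continuous.matrix_det continuous_id⟩
  refine ((D.hasFDerivAt (M t)).comp_hasDerivAt t hM).congr_deriv ?_
  calc D.linearDeriv (M t) M' = ∑ i, ((M t).updateRow i (M' i)).det :=
        D.linearDeriv_apply (M t) M'
    _ = (M' * (M t).adjugate).trace :=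
        Finset.sum_congr rfl fun i _ => det_updateRow_eq_vecMul_adjugate _ _ _
    _ = ((M t).adjugate * M').trace := Matrix.trace_mul_comm _ _

lemma hasDerivAt_det_of_isUnit (hu : IsUnit (M t)) (hM : HasDerivAt M M' t) :
    HasDerivAt (fun s => (M s).det) ((M t).det * ((M t)⁻¹ * M').trace) t := by
  refine (hasDerivAt_det hM).congr_deriv ?_
  rw [Matrix.inv_def, Matrix.smul_mul, Matrix.trace_smul, smul_eq_mul,
    Ring.mul_inverse_cancel_left _ _ ((Matrix.isUnit_iff_isUnit_det _).1 hu)]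

end Jacobi

section InverseAndDet

variable {M : ℝ → Matrix ι ι ℝ} {M' M'' : Matrix ι ι ℝ} {t : ℝ}

lemma HasSecondDerivAt.matrix_inv (hu : IsUnit (M t)) (hM : HasSecondDerivAt M M' M'' t) :
    HasSecondDerivAt (fun s => (M s)⁻¹) (-((M t)⁻¹ * M' * (M t)⁻¹))
      (2 * ((M t)⁻¹ * M' * (M t)⁻¹ * M' * (M t)⁻¹) - (M t)⁻¹ * M'' * (M t)⁻¹) t := by
  simp only [Matrix.nonsing_inv_eq_ringInverse]
  exact hM.ringInverse hu

lemma HasSecondDerivAt.matrix_det (hu : IsUnit (M t)) (hM : HasSecondDerivAt M M' M'' t) :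
    HasSecondDerivAt (fun s => (M s).det) ((M t).det * ((M t)⁻¹ * M').trace)
      ((M t).det * (((M t)⁻¹ * M'').trace + ((M t)⁻¹ * M').trace ^ 2
        - ((M t)⁻¹ * M' * ((M t)⁻¹ * M')).trace)) t := by
  have hMt := hM.hasDerivAt
  have hinv := (hM.matrix_inv hu).hasDerivAt
  obtain ⟨g, hMg, rfl, hg⟩ := hM
  have hunit : ∀ᶠ s in 𝓝 t, IsUnit (M s) := hMt.continuousAt.eventually (Units.isOpen.mem_nhds hu)
  let traceL : Matrix ι ι ℝ →L[ℝ] ℝ :=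
    ⟨Matrix.traceLinearMap ι ℝ ℝ, Continuous.matrix_trace continuous_id⟩
  have htrace := traceL.hasFDerivAt.comp_hasDerivAt t (hinv.fun_mul hg)
  refine ⟨fun s => (M s).det * ((M s)⁻¹ * g s).trace,
    hunit.mp (hMg.mono fun s hs hus => hasDerivAt_det_of_isUnit hus hs), rfl,
    ((hasDerivAt_det_of_isUnit hu hMt).mul htrace).congr_deriv ?_⟩
  change (M t).det * ((M t)⁻¹ * g t).trace * ((M t)⁻¹ * g t).trace
    + (M t).det * (-((M t)⁻¹ * g t * (M t)⁻¹) * g t + (M t)⁻¹ * M'').trace = _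
  rw [Matrix.trace_add, Matrix.neg_mul, Matrix.trace_neg, ← Matrix.mul_assoc _ _ (g t)]
  ring

variable {n : WithTop ℕ∞}

omit [DecidableEq ι] in
lemma contDiff_matrix_entry {κ : Type*} [Fintype κ] (i : ι) (j : κ) :
    ContDiff ℝ n fun A : Matrix ι κ ℝ => A i j :=
  (Matrix.entryLinearMap ℝ ℝ i j).toContinuousLinearMap.contDiff

lemma contDiff_det : ContDiff ℝ n fun A : Matrix ι ι ℝ => A.det := by
  simp only [Matrix.det_apply]
  exact ContDiff.sum fun σ _ =>
    (contDiff_prod fun i _ => contDiff_matrix_entry (σ i) i).const_smul (Equiv.Perm.sign σ)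

omit [DecidableEq ι] in
lemma contDiff_vecMul {κ : Type*} [Fintype κ] :
    ContDiff ℝ n fun q : (ι → ℝ) × Matrix ι κ ℝ => q.1 ᵥ* q.2 :=
  contDiff_pi.2 fun j => ContDiff.sum fun i _ =>
    ((contDiff_apply ℝ ℝ i).comp contDiff_fst).mul ((contDiff_matrix_entry i j).comp contDiff_snd)

lemma contDiffAt_matrix_inv {A : Matrix ι ι ℝ} (hA : IsUnit A) :
    ContDiffAt ℝ n (fun M : Matrix ι ι ℝ => M⁻¹) A := by
  obtain ⟨v, rfl⟩ := hA
  simp only [Matrix.nonsing_inv_eq_ringInverse]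
  exact contDiffAt_ringInverse ℝ v

end InverseAndDet

section Deformation

/-- The second-order deformation `I + tB + (t²/2)C` of the identity matrix. -/
noncomputable def deformation (B C : Matrix ι ι ℝ) (t : ℝ) : Matrix ι ι ℝ :=
  1 + t • B + (t ^ 2 / 2) • C

/-- The space of parameters `((z, p), (B, C))` of the deformed energy density: the value and
gradient of the deformed function, and the first- and second-order coefficients of the
deformation matrix. -/
abbrev DeformationParam (ι : Type*) : Type _ :=
  (ℝ × (ι → ℝ)) × Matrix ι ι ℝ × Matrix ι ι ℝ

/-- The integrand `F(z, p·M⁻¹) det M` of the deformed energy, with `M = I + tB + (t²/2)C`, as a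
function of `(t, (z, p), (B, C))`. -/
noncomputable def deformedIntegrand (F : ℝ × (ι → ℝ) → ℝ) (q : ℝ × DeformationParam ι) : ℝ :=
  F (q.2.1.1, q.2.1.2 ᵥ* (deformation q.2.2.1 q.2.2.2 q.1)⁻¹)
    * (deformation q.2.2.1 q.2.2.2 q.1).det

variable (ι) in
/-- The parameters `(t, (z, p), (B, C))` at which `I + tB + (t²/2)C` is invertible. -/
def deformationDomain : Set (ℝ × DeformationParam ι) :=
  {q | IsUnit (deformation q.2.2.1 q.2.2.2 q.1)}

lemma contDiff_deformation {n : WithTop ℕ∞} :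
    ContDiff ℝ n fun q : ℝ × DeformationParam ι =>
      deformation q.2.2.1 q.2.2.2 q.1 := by
  unfold deformation
  fun_prop

lemma isOpen_deformationDomain : IsOpen (deformationDomain ι) := by
  have hcont := (contDiff_deformation (ι := ι) (n := 0)).continuous
  have hunits : IsOpen {A : Matrix ι ι ℝ | IsUnit A} := Units.isOpen
  exact hunits.preimage hcont

lemma contDiffOn_deformedIntegrand {n : WithTop ℕ∞} {F : ℝ × (ι → ℝ) → ℝ} (hF : ContDiff ℝ n F) :
    ContDiffOn ℝ n (deformedIntegrand F) (deformationDomain ι) := by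
  intro q hq
  have hM := (contDiff_deformation (ι := ι) (n := n)).contDiffAt (x := q)
  have hinv := (contDiffAt_matrix_inv hq).comp q hM
  have hz : ContDiffAt ℝ n (fun q : ℝ × DeformationParam ι => q.2.1.1) q := by
    fun_prop
  have hp : ContDiffAt ℝ n (fun q : ℝ × DeformationParam ι => q.2.1.2) q := by
    fun_prop
  have hpinv := contDiff_vecMul.contDiffAt.comp q (hp.prodMk hinv)
  exact ((hF.contDiffAt.comp q (hz.prodMk hpinv)).mul
    (contDiff_det.contDiffAt.comp q hM)).contDiffWithinAt

omit [Fintype ι] in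
lemma deformation_zero (B C : Matrix ι ι ℝ) : deformation B C 0 = 1 := by
  simp [deformation]

lemma hasSecondDerivAt_deformation (B C : Matrix ι ι ℝ) :
    HasSecondDerivAt (deformation B C) B C 0 := by
  refine ⟨fun t => B + t • C, .of_forall fun t => ?_, by simp, ?_⟩
  · refine ((((hasDerivAt_id t).smul_const B).const_add 1).add
      ((((hasDerivAt_id t).pow 2).div_const 2).smul_const C)).congr_deriv ?_
    simp
  · exact (((hasDerivAt_id (0 : ℝ)).smul_const C).const_add B).congr_deriv (one_smul ℝ C)

lemma hasSecondDerivAt_deformation_inv (B C : Matrix ι ι ℝ) :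
    HasSecondDerivAt (fun t => (deformation B C t)⁻¹) (-B) (2 * (B * B) - C) 0 := by
  simpa [deformation_zero] using
    (hasSecondDerivAt_deformation B C).matrix_inv (by simp [deformation_zero])

lemma hasSecondDerivAt_deformation_det (B C : Matrix ι ι ℝ) :
    HasSecondDerivAt (fun t => (deformation B C t).det) B.trace
      (C.trace + B.trace ^ 2 - (B * B).trace) 0 := by
  simpa [deformation_zero] using
    (hasSecondDerivAt_deformation B C).matrix_det (by simp [deformation_zero])

lemma hasSecondDerivAt_vecMul_deformation_inv (p : ι → ℝ) (B C : Matrix ι ι ℝ) :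
    HasSecondDerivAt (fun t => p ᵥ* (deformation B C t)⁻¹) (-(p ᵥ* B))
      ((-2 : ℝ) • ((1 / 2 : ℝ) • (p ᵥ* C) - p ᵥ* (B * B))) 0 := by
  let L : Matrix ι ι ℝ →L[ℝ] (ι → ℝ) := (Matrix.vecMulBilin ℝ ℝ p).toContinuousLinearMap
  refine ((hasSecondDerivAt_deformation_inv B C).clm_comp L).congr_derivs
    (Matrix.vecMul_neg _ _) ?_
  change p ᵥ* (2 * (B * B) - C) = _
  rw [Matrix.vecMul_sub, two_mul, Matrix.vecMul_add]
  module

lemma hasSecondDerivAt_deformedIntegrand {F : ℝ × (ι → ℝ) → ℝ} {z : ℝ} {p : ι → ℝ}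
    (hF : ContDiffAt ℝ 2 F (z, p)) (B C : Matrix ι ι ℝ) :
    HasSecondDerivAt (fun t => deformedIntegrand F (t, (z, p), (B, C)))
      (F (z, p) * B.trace - fderiv ℝ F (z, p) (0, p ᵥ* B))
      (F (z, p) * (C.trace + B.trace ^ 2 - (B * B).trace)
        - 2 * fderiv ℝ F (z, p) (0, p ᵥ* B) * B.trace
        - 2 * fderiv ℝ F (z, p) (0, (1 / 2 : ℝ) • (p ᵥ* C) - p ᵥ* (B * B))
        + fderiv ℝ (fderiv ℝ F) (z, p) (0, p ᵥ* B) (0, p ᵥ* B)) 0 := by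
  have hγ := (HasSecondDerivAt.const z).prodMk (hasSecondDerivAt_vecMul_deformation_inv p B C)
  have hFγ := hγ.contDiffAt_comp (Ψ := F) (by simpa [deformation_zero] using hF)
  have hneg (v : ι → ℝ) : ((0 : ℝ), -v) = -(0, v) := by simp
  have hsmul (c : ℝ) (v : ι → ℝ) : ((0 : ℝ), c • v) = c • (0, v) := by simp
  refine (hFγ.mul (hasSecondDerivAt_deformation_det B C)).congr_derivs ?_ ?_ <;>
  · simp only [deformation_zero, inv_one, Matrix.vecMul_one, Matrix.det_one, mul_one, hneg, hsmul,
      map_neg, map_smul, neg_apply, neg_neg, smul_eq_mul]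
    ring

end Deformation

end Matrix

section Coordinates

variable {N : ℕ}

lemma linearMap_apply_eq_sum_single_mul {ι R : Type*} [Fintype ι] [DecidableEq ι] [CommSemiring R]
    (f : (ι → R) →ₗ[R] R) (v : ι → R) : f v = ∑ i, f (Pi.single i 1) * v i := by
  conv_lhs => rw [pi_eq_sum_univ' v, map_sum]
  exact Finset.sum_congr rfl fun i _ => by rw [map_smul, smul_eq_mul, mul_comm]

lemma fderiv_zero_prod_eq_sum_Fp (F : ℝ × (Fin N → ℝ) → ℝ) (z : ℝ) (p v : Fin N → ℝ) :
    fderiv ℝ F (z, p) (0, v) = ∑ j, Fp F j z p * v j :=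
  linearMap_apply_eq_sum_single_mul (fderiv ℝ F (z, p) ∘L .inr ℝ ℝ (Fin N → ℝ)).toLinearMap v

lemma fderiv_fderiv_zero_prod_eq_sum_Fpp {F : ℝ × (Fin N → ℝ) → ℝ} {z : ℝ} {p : Fin N → ℝ}
    (hF : DifferentiableAt ℝ (fderiv ℝ F) (z, p)) (v w : Fin N → ℝ) :
    fderiv ℝ (fderiv ℝ F) (z, p) (0, v) (0, w) = ∑ i, ∑ j, Fpp F i j z p * v i * w j := by
  have hFpp (j : Fin N) : fderiv ℝ (fderiv ℝ F) (z, p) (0, v) (0, Pi.single j 1) =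
      ∑ i, Fpp F i j z p * v i := by
    have hswap : fderiv ℝ (fun q => fderiv ℝ F q (0, Pi.single j 1)) (z, p) (0, v) =
        fderiv ℝ (fderiv ℝ F) (z, p) (0, v) (0, Pi.single j 1) := by
      rw [fderiv_clm_apply hF (by fun_prop)]
      simp
    rw [← hswap]
    exact linearMap_apply_eq_sum_single_mul
      (fderiv ℝ _ (z, p) ∘L .inr ℝ ℝ (Fin N → ℝ)).toLinearMap v
  calc fderiv ℝ (fderiv ℝ F) (z, p) (0, v) (0, w)
      = ∑ j, fderiv ℝ (fderiv ℝ F) (z, p) (0, v) (0, Pi.single j 1) * w j :=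
        linearMap_apply_eq_sum_single_mul
          (fderiv ℝ (fderiv ℝ F) (z, p) (0, v) ∘L .inr ℝ ℝ (Fin N → ℝ)).toLinearMap w
    _ = ∑ i, ∑ j, Fpp F i j z p * v i * w j := by
        simp only [hFpp, Finset.sum_mul]
        exact Finset.sum_comm

end Coordinates

section DeformationMatrix

open scoped Matrix Matrix.Norms.Operator

variable {N : ℕ} {u : (Fin N → ℝ) → ℝ} {η W : (Fin N → ℝ) → (Fin N → ℝ)}

/-- The Jacobian matrix `∇η`, with entries `∂η^i/∂x_j`. -/
noncomputable def jacobian (η : (Fin N → ℝ) → (Fin N → ℝ)) (x : Fin N → ℝ) :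
    Matrix (Fin N) (Fin N) ℝ :=
  Matrix.of fun i j => pdv (fun z => η z i) j x

/-- The point `((u, ∇u), (∇η, ∇W))` of the parameter space of `deformedIntegrand` attached
to `x`. -/
noncomputable def deformationParamAt (u : (Fin N → ℝ) → ℝ) (η W : (Fin N → ℝ) → (Fin N → ℝ))
    (x : Fin N → ℝ) : DeformationParam (Fin N) :=
  ((u x, grad u x), (jacobian η x, jacobian W x))

lemma defMat_eq_deformation (η W : (Fin N → ℝ) → (Fin N → ℝ)) (t : ℝ) (x : Fin N → ℝ) :
    defMat η W t x = deformation (jacobian η x) (jacobian W x) t := by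
  ext i j
  simp [defMat, deformation, jacobian, Matrix.one_apply]

lemma contDiff_pdv {m n : WithTop ℕ∞} (hu : ContDiff ℝ n u) (hmn : m + 1 ≤ n) (j : Fin N) :
    ContDiff ℝ m (pdv u j) :=
  (hu.fderiv_right hmn).clm_apply contDiff_const

lemma contDiff_advf {m n : WithTop ℕ∞} (hη : ContDiff ℝ n η) (hmn : m + 1 ≤ n) :
    ContDiff ℝ m (advf η) := by
  have hcoord := contDiff_pi.1 hη
  exact contDiff_pi.2 fun i => ContDiff.sum fun j _ =>
    ((hcoord j).of_le (le_self_add.trans hmn)).mul (contDiff_pdv (hcoord i) hmn j)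

lemma continuous_jacobian (hη : ContDiff ℝ 1 η) : Continuous (jacobian η) :=
  continuous_matrix fun i j => (contDiff_pdv (m := 0) (contDiff_pi.1 hη i) (by simp) j).continuous

lemma continuous_deformationParamAt (hu : ContDiff ℝ 1 u) (hη : ContDiff ℝ 1 η)
    (hW : ContDiff ℝ 1 W) : Continuous (deformationParamAt u η W) :=
  (hu.continuous.prodMk <| continuous_pi fun i =>
    (contDiff_pdv (m := 0) hu (by simp) i).continuous).prodMk
      ((continuous_jacobian hη).prodMk (continuous_jacobian hW))

lemma exists_pos_forall_mem_deformationDomain {X ι : Type*} [TopologicalSpace X] [Fintype ι]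
    [DecidableEq ι] {K : Set X} (hK : IsCompact K)
    {w : X → DeformationParam ι} (hw : Continuous w) :
    ∃ τ > (0 : ℝ), ∀ t, |t| < τ → ∀ x ∈ K, (t, w x) ∈ deformationDomain ι := by
  have hnear : ∀ᶠ t in 𝓝 (0 : ℝ), ∀ x ∈ K, (t, w x) ∈ deformationDomain ι := by
    refine hK.eventually_forall_of_forall_eventually fun x _ => ?_
    have hzero : ((0 : ℝ), w x) ∈ deformationDomain ι := by
      simp [deformationDomain, deformation_zero]
    have hcont : Continuous fun q : ℝ × X => (q.1, w q.2) := by fun_prop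
    exact hcont.continuousAt.eventually (isOpen_deformationDomain.mem_nhds hzero)
  simpa [dist_zero_right] using Metric.eventually_nhds_iff.1 hnear

/-- The integrand of the second variation: `F·X − 2(∇_pF, ∇u·∇η) div η − 2(∇_pF, Y)
+ F_{p_ip_j}(∇u·∇η)_i(∇u·∇η)_j` with `X = div W + (div η)² − trace((∇η)²)` and
`Y = (1/2)∇u·∇W − ∇u·(∇η)²`. The second-order field `W` is independent of `η`. -/
noncomputable def secondVariationDensity (F : ℝ × (Fin N → ℝ) → ℝ) (u : (Fin N → ℝ) → ℝ)
    (η W : (Fin N → ℝ) → (Fin N → ℝ)) (x : Fin N → ℝ) : ℝ :=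
  F (u x, grad u x)
      * ((∑ i, pdv (fun z => W z i) i x)
          + (∑ i, pdv (fun z => η z i) i x) ^ 2
          - ∑ i, ∑ j, pdv (fun z => η z i) j x * pdv (fun z => η z j) i x)
    - 2 * (∑ j, Fp F j (u x) (grad u x)
          * (∑ i, pdv u i x * pdv (fun z => η z i) j x))
        * (∑ i, pdv (fun z => η z i) i x)
    - 2 * (∑ k, Fp F k (u x) (grad u x)
          * ((1 / 2) * (∑ i, pdv u i x * pdv (fun z => W z i) k x)
              - ∑ i, ∑ j, pdv u i x * pdv (fun z => η z i) j x
                  * pdv (fun z => η z j) k x))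
    + ∑ i, ∑ j, Fpp F i j (u x) (grad u x)
        * (∑ l, pdv u l x * pdv (fun z => η z l) i x)
        * (∑ l, pdv u l x * pdv (fun z => η z l) j x)

lemma derivFst_derivFst_deformedIntegrand_zero {F : ℝ × (Fin N → ℝ) → ℝ} (hF : ContDiff ℝ 2 F)
    (u : (Fin N → ℝ) → ℝ) (η W : (Fin N → ℝ) → (Fin N → ℝ)) (x : Fin N → ℝ) :
    derivFst (derivFst (deformedIntegrand F)) (0, deformationParamAt u η W x) =
      secondVariationDensity F u η W x := by
  have hdiff : Differentiable ℝ (fderiv ℝ F) :=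
    (hF.fderiv_right (m := 1) (by norm_num)).differentiable (by simp)
  have hsquare (k : Fin N) : (grad u x ᵥ* (jacobian η x * jacobian η x)) k =
      ∑ i, ∑ j, pdv u i x * pdv (fun z => η z i) j x * pdv (fun z => η z j) k x := by
    simp only [Matrix.vecMul, dotProduct, Matrix.mul_apply, Finset.mul_sum, mul_assoc]
    rfl
  refine (hasSecondDerivAt_deformedIntegrand (hF.contDiffAt (x := (u x, grad u x)))
    (jacobian η x) (jacobian W x)).deriv_deriv.trans ?_
  rw [fderiv_fderiv_zero_prod_eq_sum_Fpp (hdiff _), fderiv_zero_prod_eq_sum_Fp,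
    fderiv_zero_prod_eq_sum_Fp]
  simp only [Pi.sub_apply, hsquare]
  rfl

theorem second_inner_variation_change_of_variables_general (μ : Measure (Fin N → ℝ))
    [IsFiniteMeasureOnCompacts μ] {Ω : Set (Fin N → ℝ)} (hΩb : Bornology.IsBounded Ω)
    {F : ℝ × (Fin N → ℝ) → ℝ} (hF : ContDiff ℝ 2 F) (hu : ContDiff ℝ 1 u)
    (hη : ContDiff ℝ 1 η) (hW : ContDiff ℝ 1 W) :
    ∃ τ > (0 : ℝ),
      (∀ t : ℝ, |t| < τ → ∀ x ∈ Ω, IsUnit (defMat η W t x)) ∧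
      ∃ A' : ℝ → ℝ,
        (∀ t : ℝ, |t| < τ →
          HasDerivAt
            (fun s : ℝ => ∫ x in Ω,
              F (u x, fun j => ∑ i, pdv u i x * (defMat η W s x)⁻¹ i j)
                * (defMat η W s x).det ∂μ)
            (A' t) t) ∧
        HasDerivAt A' (∫ x in Ω, secondVariationDensity F u η W x ∂μ) 0 := by
  have hK : IsCompact (closure Ω) := hΩb.isCompact_closure
  have hw := continuous_deformationParamAt hu hη hW
  obtain ⟨τ, hτ, hdomain⟩ := exists_pos_forall_mem_deformationDomain hK hw
  have hJ : IsOpen {t : ℝ | |t| < τ} := isOpen_lt continuous_abs continuous_const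
  have hderiv {G : ℝ × DeformationParam (Fin N) → ℝ}
      (hG : ContDiffOn ℝ 1 G (deformationDomain (Fin N))) (t : ℝ) (ht : |t| < τ) :
      HasDerivAt (fun r => ∫ x in Ω, G (r, deformationParamAt u η W x) ∂μ)
        (∫ x in Ω, derivFst G (t, deformationParamAt u η W x) ∂μ) t :=
    hasDerivAt_integral_of_contDiffOn (V := deformationDomain (Fin N)) hK subset_closure hJ
      isOpen_deformationDomain hG hw.continuousOn hdomain ht
  have hG : ContDiffOn ℝ 2 (deformedIntegrand F) (deformationDomain (Fin N)) :=
    contDiffOn_deformedIntegrand hF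
  have hG' : ContDiffOn ℝ 1 (derivFst (deformedIntegrand F)) (deformationDomain (Fin N)) :=
    contDiffOn_derivFst isOpen_deformationDomain hG (by norm_num)
  refine ⟨τ, hτ, fun t ht x hx => ?_,
    fun t => ∫ x in Ω, derivFst (deformedIntegrand F) (t, deformationParamAt u η W x) ∂μ,
    fun t ht => ?_, ?_⟩
  · rw [defMat_eq_deformation]
    exact hdomain t ht x (subset_closure hx)
  · simp only [defMat_eq_deformation]
    exact hderiv (hG.of_le (by norm_num)) t ht
  · simpa only [derivFst_derivFst_deformedIntegrand_zero hF] using hderiv hG' 0 (by simpa using hτ)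

end DeformationMatrix

/-- Second inner variation via change of variables: with `Z := (η·∇)η`,
`M_t(x) := I + t∇η + (t²/2)∇Z` and `𝔄(t) := ∫_Ω F(u, ∇u·M_t⁻¹) det M_t`, `𝔄` is twice
differentiable at `t = 0` and
`𝔄''(0) = ∫_Ω {F X − 2(∇_pF, ∇u·∇η) div η − 2(∇_pF, Y) + F_{p_ip_j}(∇u·∇η)_i(∇u·∇η)_j}`,
where `X := div Z + (div η)² − trace((∇η)²)` and `Y := (1/2)∇u·∇Z − ∇u·(∇η)²`. -/
theorem second_inner_variation_change_of_variables
    (N : ℕ) (Ω : Set (Fin N → ℝ)) (hΩo : IsOpen Ω) (hΩb : Bornology.IsBounded Ω)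
    (F : ℝ × (Fin N → ℝ) → ℝ) (hF : ContDiff ℝ 3 F)
    (u : (Fin N → ℝ) → ℝ) (hu : ContDiff ℝ 3 u) (hub : BddUpTo 3 u)
    (η : (Fin N → ℝ) → (Fin N → ℝ))
    (hη : ContDiff ℝ 3 η) (hηb : BddUpTo 3 η) :
    ∃ τ > (0 : ℝ),
      (∀ t : ℝ, |t| < τ → ∀ x ∈ Ω, IsUnit (defMat η (advf η) t x)) ∧
      ∃ A' : ℝ → ℝ,
        (∀ t : ℝ, |t| < τ →
          HasDerivAt
            (fun s : ℝ => ∫ x in Ω,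
              F (u x, fun j => ∑ i, pdv u i x * (defMat η (advf η) s x)⁻¹ i j)
                * (defMat η (advf η) s x).det)
            (A' t) t) ∧
        HasDerivAt A'
          (∫ x in Ω,
            (F (u x, grad u x)
                * ((∑ i, pdv (fun z => advf η z i) i x)
                    + (∑ i, pdv (fun z => η z i) i x) ^ 2
                    - ∑ i, ∑ j, pdv (fun z => η z i) j x * pdv (fun z => η z j) i x)
              - 2 * (∑ j, Fp F j (u x) (grad u x)
                    * (∑ i, pdv u i x * pdv (fun z => η z i) j x))
                  * (∑ i, pdv (fun z => η z i) i x)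
              - 2 * (∑ k, Fp F k (u x) (grad u x)
                    * ((1 / 2) * (∑ i, pdv u i x * pdv (fun z => advf η z i) k x)
                        - ∑ i, ∑ j, pdv u i x * pdv (fun z => η z i) j x
                            * pdv (fun z => η z j) k x))
              + ∑ i, ∑ j, Fpp F i j (u x) (grad u x)
                  * (∑ l, pdv u l x * pdv (fun z => η z l) i x)
                  * (∑ l, pdv u l x * pdv (fun z => η z l) j x))) 0 := by
  exact second_inner_variation_change_of_variables_general volume hΩb (hF.of_le (by norm_num))
    (hu.of_le (by norm_num)) (hη.of_le (by norm_num))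
    (contDiff_advf (hη.of_le (by norm_num)) le_rfl)

end PaperAC
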